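/- arXiv:1811.03843 — 2 statements merged into one kernel-verified Lean document; each statement's English description precedes it below -/
import Mathlib

section
/- For all integers x, y ≥ 1, the relation [B, B^y C^x] = (1 − m^x)·B^{y+1} C^x holds in R. -/
noncomputable section

open FreeAlgebra

/-- The defining relation `A*B = m • (B*A) + b·1` on the free algebra `F⟨A,B⟩`
(the free unital associative algebra on two generators `A = ι F 0`, `B = ι F 1`). -/
def twistRel (F : Type*) [Field F] (m b : F) :
    FreeAlgebra F (Fin 2) → FreeAlgebra F (Fin 2) → Prop :=
  fun p q => p = ι F 0 * ι F 1 ∧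
    q = m • (ι F 1 * ι F 0) + algebraMap F (FreeAlgebra F (Fin 2)) b

/-- `R = F⟨A,B⟩ / (AB − m·BA − b·1)`. -/
abbrev TwistAlg (F : Type*) [Field F] (m b : F) := RingQuot (twistRel F m b)

/-- The image of the generator `A` in `R`. -/
def genA (F : Type*) [Field F] (m b : F) : TwistAlg F m b :=
  RingQuot.mkAlgHom F (twistRel F m b) (ι F 0)

/-- The image of the generator `B` in `R`. -/
def genB (F : Type*) [Field F] (m b : F) : TwistAlg F m b :=
  RingQuot.mkAlgHom F (twistRel F m b) (ι F 1)

/-- `C := A*B − B*A` in `R`. -/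
def genC (F : Type*) [Field F] (m b : F) : TwistAlg F m b :=
  genA F m b * genB F m b - genB F m b * genA F m b

theorem pow_mul_eq_pow_smul_of_mul_eq_smul {K R : Type*} [Monoid K] [Monoid R] [MulAction K R]
    [IsScalarTower K R R] [SMulCommClass K R R] {q : K} {u v : R}
    (h : v * u = q • (u * v)) (n : ℕ) : v ^ n * u = q ^ n • (u * v ^ n) := by
  induction n with
  | zero => simp
  | succ n ih =>
    calc v ^ (n + 1) * u = v ^ n * (v * u) := by rw [pow_succ, mul_assoc]
      _ = q • ((v ^ n * u) * v) := by rw [h, mul_smul_comm, ← mul_assoc]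
      _ = q ^ (n + 1) • (u * v ^ (n + 1)) := by
        rw [ih, smul_mul_assoc, smul_smul, ← pow_succ', mul_assoc, ← pow_succ]

section Module

variable {K R : Type*} [Ring K] [Ring R] [Module K R] [IsScalarTower K R R] [SMulCommClass K R R]

theorem lie_pow_mul_pow_of_mul_eq_smul {q : K} {u v : R} (h : v * u = q • (u * v)) (k n : ℕ) :
    ⁅u, u ^ k * v ^ n⁆ = (1 - q ^ n) • (u ^ (k + 1) * v ^ n) := by
  have left_mul : u * (u ^ k * v ^ n) = u ^ (k + 1) * v ^ n := by rw [← mul_assoc, ← pow_succ']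
  have right_mul : u ^ k * v ^ n * u = q ^ n • (u ^ (k + 1) * v ^ n) := by
    rw [mul_assoc, pow_mul_eq_pow_smul_of_mul_eq_smul h, mul_smul_comm, ← mul_assoc, ← pow_succ]
  rw [Ring.lie_def, left_mul, right_mul, sub_smul, one_smul]

theorem lie_mul_eq_smul_mul_lie {q : K} {a b z : R} (h : a * b = q • (b * a) + z)
    (hz : Commute z b) : ⁅a, b⁆ * b = q • (b * ⁅a, b⁆) := by
  calc ⁅a, b⁆ * b = (a * b) * b - b * (a * b) := by rw [Ring.lie_def, sub_mul, mul_assoc b]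
    _ = (q • (b * a) + z) * b - b * (q • (b * a) + z) := by rw [h]
    _ = q • (b * (a * b)) - q • (b * (b * a)) := by
      rw [add_mul, mul_add, hz.eq, smul_mul_assoc, mul_smul_comm, mul_assoc b a b,
        add_sub_add_right_eq_sub]
    _ = q • (b * ⁅a, b⁆) := by rw [Ring.lie_def, mul_sub, smul_sub]

theorem stmt10_general {q : K} {a b z : R} (h : a * b = q • (b * a) + z) (hz : Commute z b)
    (x y : ℕ) : ⁅b, b ^ y * ⁅a, b⁆ ^ x⁆ = (1 - q ^ x) • (b ^ (y + 1) * ⁅a, b⁆ ^ x) :=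
  lie_pow_mul_pow_of_mul_eq_smul (lie_mul_eq_smul_mul_lie h hz) y x

end Module

theorem genA_mul_genB (F : Type*) [Field F] (m b : F) :
    genA F m b * genB F m b =
      m • (genB F m b * genA F m b) + algebraMap F (TwistAlg F m b) b := by
  have hrel := RingQuot.mkAlgHom_rel F (s := twistRel F m b) ⟨rfl, rfl⟩
  rwa [map_mul, map_add, map_smul, map_mul, AlgHom.commutes] at hrel

theorem stmt10 (F : Type*) [Field F] (m b : F) (hm0 : m ≠ 0) (hm1 : m ≠ 1)
    (x y : ℕ) (hx : 1 ≤ x) (hy : 1 ≤ y) :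
    ⁅genB F m b, genB F m b ^ y * genC F m b ^ x⁆ =
      (1 - m ^ x) • (genB F m b ^ (y + 1) * genC F m b ^ x) :=
  stmt10_general (genA_mul_genB F m b) (Algebra.commute_algebraMap_left b _) x y
end
end

section
/- For every integer k ≥ 1, the relations (ad C)^k(A) = (1−m)^k·C^k A and (1−m)^{k−1}(1 − m^{k+1})·C^{k+1} = (1−m)^{k−1}(1 − m^k)·b·C^k − m^k·((ad B) ∘ (ad C)^k)(A) hold in R (the latter is Lemma 4.4 with denominators cleared). -/
noncomputable section

open FreeAlgebra

attribute [local instance 100] LieRing.ofAssociativeRing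

/-!
Put `C = AB - BA`. The relation `AB = m BA + b` gives `(1 - m) BA = b - C` and
`(1 - m) AB = b - m C`, and hence `A C = m C A` and `C B = m B C`. The first of these says that
`ad C` multiplies `Cⁿ A` on the left by `(1 - m) C`, which yields the formula for `(ad C)ᵏ A`.
The second gives `mᵏ [B, Cᵏ A] = Cᵏ (BA - mᵏ AB)`, and multiplying by `1 - m` turns the right-hand
side into a polynomial in `C`.
-/

theorem pow_mul_eq_smul_of_mul_eq_smul {M R : Type*} [Monoid M] [Monoid R] [MulAction M R]
    [IsScalarTower M R R] [SMulCommClass M R R] {m : M} {x y : R} (h : x * y = m • (y * x))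
    (n : ℕ) :
    x ^ n * y = m ^ n • (y * x ^ n) := by
  induction n with
  | zero => simp
  | succ n ih =>
    calc x ^ (n + 1) * y = x ^ n * (x * y) := by rw [pow_succ, mul_assoc]
      _ = m • (x ^ n * y * x) := by rw [h, mul_smul_comm, mul_assoc]
      _ = m ^ (n + 1) • (y * x ^ (n + 1)) := by
        rw [ih, smul_mul_assoc, smul_smul, mul_assoc, ← pow_succ, ← pow_succ']

theorem lie_pow_mul_of_mul_eq_smul {K R : Type*} [Ring K] [Ring R] [Module K R]
    [SMulCommClass K R R] {m : K} {x y : R} (h : y * x = m • (x * y)) (n : ℕ) :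
    ⁅x, x ^ n * y⁆ = (1 - m) • (x ^ (n + 1) * y) := by
  rw [Ring.lie_def, mul_assoc (x ^ n), h, mul_smul_comm, ← mul_assoc, ← mul_assoc, ← pow_succ,
    ← pow_succ', sub_smul, one_smul]

theorem ad_pow_apply_of_mul_eq_smul {K R : Type*} [CommRing K] [Ring R] [Algebra K R] {m : K}
    {x y : R} (h : y * x = m • (x * y)) (n : ℕ) :
    (LieAlgebra.ad K R x ^ n) y = (1 - m) ^ n • (x ^ n * y) := by
  induction n with
  | zero => simp
  | succ n ih =>
    rw [pow_succ', Module.End.mul_apply, ih, map_smul, LieAlgebra.ad_apply,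
      lie_pow_mul_of_mul_eq_smul h, smul_smul, ← pow_succ]

/-- The relation `AB = m BA + b` defining `TwistAlg`, for elements `A`, `B` of an arbitrary
algebra over a commutative ring. -/
def IsTwistPair {K R : Type*} [CommRing K] [Ring R] [Algebra K R] (m b : K) (A B : R) : Prop :=
  A * B = m • (B * A) + b • 1

namespace IsTwistPair

variable {K R : Type*} [CommRing K] [Ring R] [Algebra K R] {m b : K} {A B : R}

theorem one_sub_smul_mul_swap (h : IsTwistPair m b A B) :
    (1 - m) • (B * A) = b • 1 - ⁅A, B⁆ := by
  rw [Ring.lie_def, show A * B = m • (B * A) + b • 1 from h]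
  module

theorem one_sub_smul_mul (h : IsTwistPair m b A B) :
    (1 - m) • (A * B) = b • 1 - m • ⁅A, B⁆ := by
  have hBA := h.one_sub_smul_mul_swap
  calc (1 - m) • (A * B) = (1 - m) • (B * A) + (1 - m) • ⁅A, B⁆ := by
        rw [Ring.lie_def]
        module
    _ = b • 1 - m • ⁅A, B⁆ := by
        rw [hBA]
        module

theorem mul_lie (h : IsTwistPair m b A B) : A * ⁅A, B⁆ = m • (⁅A, B⁆ * A) := by
  have left : A * ⁅A, B⁆ = b • A - (1 - m) • (A * B * A) := by
    rw [← sub_sub_cancel (b • 1) ⁅A, B⁆, ← h.one_sub_smul_mul_swap, mul_sub, mul_smul_comm,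
      mul_smul_comm, mul_one, mul_assoc]
  have right : m • (⁅A, B⁆ * A) = b • A - (1 - m) • (A * B * A) := by
    rw [← smul_mul_assoc, ← sub_sub_cancel (b • 1) (m • ⁅A, B⁆), ← h.one_sub_smul_mul, sub_mul,
      smul_mul_assoc, smul_mul_assoc, one_mul]
  rw [left, right]

theorem lie_mul (h : IsTwistPair m b A B) : ⁅A, B⁆ * B = m • (B * ⁅A, B⁆) := by
  have left : ⁅A, B⁆ * B = b • B - (1 - m) • (B * (A * B)) := by
    rw [← sub_sub_cancel (b • 1) ⁅A, B⁆, ← h.one_sub_smul_mul_swap, sub_mul, smul_mul_assoc,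
      smul_mul_assoc, one_mul, mul_assoc]
  have right : m • (B * ⁅A, B⁆) = b • B - (1 - m) • (B * (A * B)) := by
    rw [← mul_smul_comm, ← sub_sub_cancel (b • 1) (m • ⁅A, B⁆), ← h.one_sub_smul_mul, mul_sub,
      mul_smul_comm, mul_smul_comm, mul_one]
  rw [left, right]

theorem pow_smul_lie_lie_pow_mul (h : IsTwistPair m b A B) (k : ℕ) :
    m ^ k • ⁅B, ⁅A, B⁆ ^ k * A⁆ = ⁅A, B⁆ ^ k * (B * A - m ^ k • (A * B)) := by
  rw [Ring.lie_def B, smul_sub, ← mul_assoc, ← smul_mul_assoc,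
    ← pow_mul_eq_smul_of_mul_eq_smul h.lie_mul, mul_sub, mul_smul_comm, mul_assoc, mul_assoc]

theorem one_sub_smul_pow_smul_lie_lie_pow_mul (h : IsTwistPair m b A B) (k : ℕ) :
    (1 - m) • m ^ k • ⁅B, ⁅A, B⁆ ^ k * A⁆ =
      ((1 - m ^ k) * b) • ⁅A, B⁆ ^ k - (1 - m ^ (k + 1)) • ⁅A, B⁆ ^ (k + 1) := by
  have hfactor : (1 - m) • (B * A - m ^ k • (A * B)) =
      ((1 - m ^ k) * b) • 1 - (1 - m ^ (k + 1)) • ⁅A, B⁆ := by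
    rw [smul_sub, smul_comm, h.one_sub_smul_mul_swap, h.one_sub_smul_mul]
    module
  rw [h.pow_smul_lie_lie_pow_mul, ← mul_smul_comm, hfactor, mul_sub, mul_smul_comm,
    mul_smul_comm, mul_one, ← pow_succ]

end IsTwistPair

theorem isTwistPair_genA_genB (F : Type*) [Field F] (m b : F) :
    IsTwistPair m b (genA F m b) (genB F m b) := by
  have hrel := RingQuot.mkAlgHom_rel F (s := twistRel F m b) ⟨rfl, rfl⟩
  rwa [map_mul, map_add, map_smul, map_mul, AlgHom.commutes,
    Algebra.algebraMap_eq_smul_one] at hrel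

theorem stmt18_general {K R : Type*} [CommRing K] [Ring R] [Algebra K R] {m b : K} {A B : R}
    (h : IsTwistPair m b A B) {k : ℕ} (hk : 1 ≤ k) :
    (LieAlgebra.ad K R ⁅A, B⁆ ^ k) A = (1 - m) ^ k • (⁅A, B⁆ ^ k * A) ∧
    ((1 - m) ^ (k - 1) * (1 - m ^ (k + 1))) • ⁅A, B⁆ ^ (k + 1) =
      ((1 - m) ^ (k - 1) * (1 - m ^ k) * b) • ⁅A, B⁆ ^ k -
        m ^ k • LieAlgebra.ad K R B ((LieAlgebra.ad K R ⁅A, B⁆ ^ k) A) := by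
  have had := ad_pow_apply_of_mul_eq_smul h.mul_lie k
  refine ⟨had, ?_⟩
  have hlie : m ^ k • LieAlgebra.ad K R B ((LieAlgebra.ad K R ⁅A, B⁆ ^ k) A) =
      (1 - m) ^ (k - 1) •
        (((1 - m ^ k) * b) • ⁅A, B⁆ ^ k - (1 - m ^ (k + 1)) • ⁅A, B⁆ ^ (k + 1)) := by
    rw [had, map_smul, LieAlgebra.ad_apply, ← h.one_sub_smul_pow_smul_lie_lie_pow_mul,
      smul_smul _ (1 - m), pow_sub_one_mul (by lia), smul_comm]
  rw [hlie]
  module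

theorem stmt18 (F : Type*) [Field F] (m b : F) (hm0 : m ≠ 0) (hm1 : m ≠ 1)
    (k : ℕ) (hk : 1 ≤ k) :
    ((LieAlgebra.ad F (TwistAlg F m b) (genC F m b)) ^ k) (genA F m b) =
      (1 - m) ^ k • (genC F m b ^ k * genA F m b) ∧
    ((1 - m) ^ (k - 1) * (1 - m ^ (k + 1))) • genC F m b ^ (k + 1) =
      ((1 - m) ^ (k - 1) * (1 - m ^ k) * b) • genC F m b ^ k -
        m ^ k • (LieAlgebra.ad F (TwistAlg F m b) (genB F m b)
          (((LieAlgebra.ad F (TwistAlg F m b) (genC F m b)) ^ k) (genA F m b))) :=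
  stmt18_general (isTwistPair_genA_genB F m b) hk
end
end
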